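/- Let A be a simple C*-algebra, and let P be a set of nonzero projections in matrix algebras over A such that: (1) for every nonzero projection q in a matrix algebra over A there exist p ∈ P and projections r, s in matrix algebras over A with p ⊕ p ⊕ r ⊕ s ∼ q ⊕ s; and (2) tsr(p M_k(A) p) ≤ N for every p ∈ P (with p ∈ M_k(A)), for some fixed N ∈ ℕ. Then for every nonzero projection q in a matrix algebra over A there exists p ∈ P such that N*p ≾ q. -/

import Mathlib

open scoped Matrix

/-- Murray–von Neumann equivalence of projections in (possibly different-sized)
matrix algebras over a C*-algebra `A`. -/
def MvNEquiv {A : Type*} [NonUnitalCStarAlgebra A] {m n : Type*} [Fintype m] [Fintype n]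
    (p : Matrix m m A) (q : Matrix n n A) : Prop :=
  ∃ v : Matrix m n A, v * vᴴ = p ∧ vᴴ * v = q

/-- `p` is a projection in a matrix algebra over `A`. -/
def IsProjM {A : Type*} [NonUnitalCStarAlgebra A] {m : Type*} [Fintype m]
    (p : Matrix m m A) : Prop :=
  pᴴ = p ∧ p * p = p

/-- `p ≾ q`: `p` is Murray–von Neumann equivalent to a subprojection `q₀` of `q`. -/
def SubEquiv {A : Type*} [NonUnitalCStarAlgebra A] {m n : Type*} [Fintype m] [Fintype n]
    (p : Matrix m m A) (q : Matrix n n A) : Prop :=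
  ∃ q₀ : Matrix n n A, IsProjM q₀ ∧ MvNEquiv p q₀ ∧ q₀ * q = q₀

/-- The block-diagonal direct sum `p ⊕ q` of two matrices over `A`. -/
def dSum {A : Type*} [NonUnitalCStarAlgebra A] {m n : Type*}
    (p : Matrix m m A) (q : Matrix n n A) : Matrix (m ⊕ n) (m ⊕ n) A :=
  Matrix.fromBlocks p 0 0 q

/-- `N * p`: the direct sum of `N` copies of `p`. -/
def nFold {A : Type*} [NonUnitalCStarAlgebra A] {m : Type*} (N : ℕ)
    (p : Matrix m m A) : Matrix (m × Fin N) (m × Fin N) A :=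
  Matrix.blockDiagonal fun _ : Fin N => p

/-- `tsr (r M r) ≤ N` for the corner of a matrix algebra over `A` by the projection `r`:
the `N`-tuples of elements of `r M r` generating `r M r` as a left ideal are dense. -/
def CornerTsrLe {A : Type*} [NonUnitalCStarAlgebra A] {m : Type*} [Fintype m]
    (r : Matrix m m A) (N : ℕ) : Prop :=
  Dense {c : Fin N → {x : Matrix m m A // r * x * r = x} |
    ∃ d : Fin N → {x : Matrix m m A // r * x * r = x},
      ∑ i, (d i : Matrix m m A) * (c i : Matrix m m A) = r}

/-- A C*-algebra is simple if its only closed two-sided ideals are `0` and the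
whole algebra. -/
def IsSimpleCStarAlgebra (A : Type*) [NonUnitalCStarAlgebra A] : Prop :=
  ∀ I : Set A, IsClosed I → (0 : A) ∈ I → (∀ x ∈ I, ∀ y ∈ I, x + y ∈ I) →
    (∀ x ∈ I, -x ∈ I) → (∀ x ∈ I, ∀ a : A, a * x ∈ I) → (∀ x ∈ I, ∀ a : A, x * a ∈ I) →
    I = {0} ∨ I = Set.univ

/-!
The argument takes place in the monoid `V(A)` of equivalence classes of idempotent matrices.
Iterating hypothesis (1) yields `p ∈ P` with `[q] + s = N[p] + r + s` in `V(A)`. As `A` is simple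
and `p ≠ 0`, the ideal of matrices `∑ Xᵢ p Yᵢ` is dense, so it contains every idempotent; hence
`s` is a summand of a multiple of `[p]` and may be replaced by `M[p]`. The stable rank hypothesis
allows one copy of `[p]` at a time to be cancelled from `[p] + (N[p] + b) = [p] + c`: a morphism
from `p` to `N * p` can be perturbed to be left invertible, and a perturbation small enough keeps
the relevant element of the corner `p M(A) p` invertible (Warfield's argument). Thus `N[p]` is a
summand of `[q]`, and polar decomposition turns this algebraic relation into `N * p ≾ q`.
-/

section RowsCols

open Matrix

variable {R : Type*} [NonUnitalNonAssocSemiring R] {ι κ m n : Type*} [Fintype ι] {k l : Type*}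

theorem fromRows_mul_fromCols_nonUnital (x : Matrix k ι R) (y : Matrix l ι R) (z : Matrix ι m R)
    (w : Matrix ι n R) :
    fromRows x y * fromCols z w = fromBlocks (x * z) (x * w) (y * z) (y * w) := by
  ext (i | i) (j | j) <;> rfl

theorem fromCols_mul_fromRows_nonUnital [Fintype κ] (x : Matrix m ι R) (y : Matrix m κ R)
    (z : Matrix ι n R) (w : Matrix κ n R) : fromCols x y * fromRows z w = x * z + y * w := by
  ext i j
  simp [mul_apply]

theorem mul_fromCols_nonUnital (x : Matrix k ι R) (z : Matrix ι m R) (w : Matrix ι n R) :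
    x * fromCols z w = fromCols (x * z) (x * w) := by
  ext i (j | j) <;> rfl

theorem fromRows_mul_nonUnital (x : Matrix k ι R) (y : Matrix l ι R) (z : Matrix ι m R) :
    fromRows x y * z = fromRows (x * z) (y * z) := by
  ext (i | i) j <;> rfl

theorem fromCols_mul_fromBlocks_diagonal [Fintype κ] (x : Matrix k ι R) (y : Matrix k κ R)
    (z : Matrix ι m R) (w : Matrix κ n R) :
    fromCols x y * fromBlocks z 0 0 w = fromCols (x * z) (y * w) := by
  ext i (j | j) <;> simp [mul_apply]

theorem fromBlocks_diagonal_mul_fromRows [Fintype κ] (x : Matrix k ι R) (y : Matrix l κ R)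
    (z : Matrix ι m R) (w : Matrix κ m R) :
    fromBlocks x 0 0 y * fromRows z w = fromRows (x * z) (y * w) := by
  ext (i | i) j <;> simp [mul_apply]

end RowsCols

section Idempotents

open Matrix

variable {R : Type*} [NonUnitalRing R] {k l m n : Type*} [Fintype k] [Fintype l] [Fintype m]
  [Fintype n]

/-- The group `p M(R) q` of matrices fixed by `p` on the left and by `q` on the right. For
idempotent `p` and `q` these are the morphisms between the projective modules they define. -/
def idemHom (p : Matrix m m R) (q : Matrix n n R) : AddSubgroup (Matrix m n R) where
  carrier := {x | p * x = x ∧ x * q = x}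
  zero_mem' := ⟨Matrix.mul_zero p, Matrix.zero_mul q⟩
  add_mem' hx hy := ⟨by rw [Matrix.mul_add, hx.1, hy.1], by rw [Matrix.add_mul, hx.2, hy.2]⟩
  neg_mem' hx := ⟨by rw [Matrix.mul_neg, hx.1], by rw [Matrix.neg_mul, hx.2]⟩

theorem mem_idemHom {p : Matrix m m R} {q : Matrix n n R} {x : Matrix m n R} :
    x ∈ idemHom p q ↔ p * x = x ∧ x * q = x :=
  Iff.rfl

theorem mul_mem_idemHom {p : Matrix m m R} {q : Matrix n n R} {r : Matrix k k R}
    {x : Matrix m n R} {y : Matrix n k R} (hx : x ∈ idemHom p q) (hy : y ∈ idemHom q r) :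
    x * y ∈ idemHom p r :=
  ⟨by rw [← Matrix.mul_assoc, hx.1], by rw [Matrix.mul_assoc, hy.2]⟩

theorem self_mem_idemHom {p : Matrix m m R} (hp : IsIdempotentElem p) : p ∈ idemHom p p :=
  ⟨hp, hp⟩

theorem mem_idemHom_self_iff {p : Matrix m m R} (hp : IsIdempotentElem p) {x : Matrix m m R} :
    x ∈ idemHom p p ↔ p * x * p = x := by
  refine ⟨fun hx => by rw [hx.1, hx.2], fun hx => ⟨?_, ?_⟩⟩
  · rw [← hx, Matrix.mul_assoc, ← Matrix.mul_assoc p p, hp.eq]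
  · rw [← hx, Matrix.mul_assoc, hp.eq]

/-- Equivalence of idempotents over a ring: `p` and `q` define isomorphic projective modules. -/
def IdemEquiv (p : Matrix m m R) (q : Matrix n n R) : Prop :=
  ∃ x ∈ idemHom p q, ∃ y ∈ idemHom q p, x * y = p ∧ y * x = q

theorem IdemEquiv.of_mul_eq {p : Matrix m m R} {q : Matrix n n R} (hp : IsIdempotentElem p)
    (hq : IsIdempotentElem q) {x : Matrix m n R} {y : Matrix n m R} (hxy : x * y = p)
    (hyx : y * x = q) : IdemEquiv p q := by
  have hpx : p * x = x * q := by rw [← hxy, ← hyx, Matrix.mul_assoc]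
  have hyp : y * p = q * y := by rw [← hxy, ← hyx, Matrix.mul_assoc]
  refine ⟨p * x, ⟨?_, ?_⟩, y * p, ⟨?_, ?_⟩, ?_, ?_⟩
  · rw [← Matrix.mul_assoc, hp.eq]
  · rw [Matrix.mul_assoc, ← hpx, ← Matrix.mul_assoc, hp.eq]
  · rw [← Matrix.mul_assoc, ← hyp, Matrix.mul_assoc, hp.eq]
  · rw [Matrix.mul_assoc, hp.eq]
  · rw [Matrix.mul_assoc, ← Matrix.mul_assoc x, hxy, hp.eq, hp.eq]
  · rw [hyp, hpx, Matrix.mul_assoc, ← Matrix.mul_assoc y, hyx, hq.eq, hq.eq]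

theorem IdemEquiv.refl {p : Matrix m m R} (hp : IsIdempotentElem p) : IdemEquiv p p :=
  ⟨p, self_mem_idemHom hp, p, self_mem_idemHom hp, hp, hp⟩

theorem IdemEquiv.symm {p : Matrix m m R} {q : Matrix n n R} (h : IdemEquiv p q) :
    IdemEquiv q p :=
  let ⟨x, hx, y, hy, hxy, hyx⟩ := h
  ⟨y, hy, x, hx, hyx, hxy⟩

theorem IdemEquiv.trans {p : Matrix m m R} {q : Matrix n n R} {r : Matrix k k R}
    (h : IdemEquiv p q) (h' : IdemEquiv q r) : IdemEquiv p r := by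
  obtain ⟨x, hx, y, hy, hxy, hyx⟩ := h
  obtain ⟨z, hz, w, hw, hzw, hwz⟩ := h'
  refine ⟨x * z, mul_mem_idemHom hx hz, w * y, mul_mem_idemHom hw hy, ?_, ?_⟩
  · rw [Matrix.mul_assoc, ← Matrix.mul_assoc z, hzw, hy.1, hxy]
  · rw [Matrix.mul_assoc, ← Matrix.mul_assoc y, hyx, hz.1, hwz]

theorem IdemEquiv.submatrix {p : Matrix m m R} (hp : IsIdempotentElem p) (e : n ≃ m) :
    IdemEquiv (p.submatrix e e) p := by
  refine .of_mul_eq (x := p.submatrix e id) (y := p.submatrix id e) ?_ hp ?_ ?_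
  · rw [IsIdempotentElem, submatrix_mul_equiv, hp.eq]
  · rw [← submatrix_mul _ _ e id e Function.bijective_id, hp.eq]
  · rw [submatrix_mul_equiv, hp.eq, submatrix_id_id]

theorem isIdempotentElem_fromBlocks {p : Matrix m m R} {q : Matrix n n R}
    (hp : IsIdempotentElem p) (hq : IsIdempotentElem q) :
    IsIdempotentElem (fromBlocks p 0 0 q) := by
  simp [IsIdempotentElem, fromBlocks_multiply, hp.eq, hq.eq]

theorem isIdempotentElem_blockDiagonal {ι : Type*} [DecidableEq ι] [Fintype ι]
    {p : ι → Matrix m m R} (hp : ∀ i, IsIdempotentElem (p i)) :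
    IsIdempotentElem (blockDiagonal p) := by
  rw [IsIdempotentElem, ← blockDiagonal_mul]
  exact congrArg _ (funext hp)

theorem IdemEquiv.fromBlocks {p : Matrix m m R} {q : Matrix n n R} {p' : Matrix k k R}
    {q' : Matrix l l R} (h : IdemEquiv p p') (h' : IdemEquiv q q') :
    IdemEquiv (fromBlocks p 0 0 q) (fromBlocks p' 0 0 q') := by
  obtain ⟨x, hx, y, hy, hxy, hyx⟩ := h
  obtain ⟨z, hz, w, hw, hzw, hwz⟩ := h'
  refine ⟨.fromBlocks x 0 0 z, ⟨?_, ?_⟩, .fromBlocks y 0 0 w, ⟨?_, ?_⟩, ?_, ?_⟩ <;>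
    simp [fromBlocks_multiply, hx.1, hx.2, hy.1, hy.2, hz.1, hz.2, hw.1, hw.2, *]

theorem IdemEquiv.fromBlocks_comm {p : Matrix m m R} {q : Matrix n n R}
    (hp : IsIdempotentElem p) (hq : IsIdempotentElem q) :
    IdemEquiv (.fromBlocks p 0 0 q) (.fromBlocks q 0 0 p) := by
  convert IdemEquiv.submatrix (isIdempotentElem_fromBlocks hq hp) (Equiv.sumComm m n)
  exact (fromBlocks_submatrix_sum_swap_sum_swap q 0 0 p).symm

theorem IdemEquiv.fromBlocks_assoc {p : Matrix m m R} {q : Matrix n n R} {r : Matrix k k R}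
    (hp : IsIdempotentElem p) (hq : IsIdempotentElem q) (hr : IsIdempotentElem r) :
    IdemEquiv (.fromBlocks (.fromBlocks p 0 0 q) 0 0 r)
      (.fromBlocks p 0 0 (.fromBlocks q 0 0 r)) := by
  convert IdemEquiv.submatrix
    (isIdempotentElem_fromBlocks hp (isIdempotentElem_fromBlocks hq hr)) (Equiv.sumAssoc m n k)
  ext ((i | i) | i) ((j | j) | j) <;> rfl

theorem IdemEquiv.zero_fromBlocks {p : Matrix m m R} (hp : IsIdempotentElem p) :
    IdemEquiv (.fromBlocks (0 : Matrix n n R) 0 0 p) p := by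
  refine .of_mul_eq (x := fromRows 0 p) (y := fromCols 0 p)
    (isIdempotentElem_fromBlocks (by simp [IsIdempotentElem]) hp) hp ?_ ?_
  · simp [fromRows_mul_fromCols_nonUnital, hp.eq]
  · simp [fromCols_mul_fromRows_nonUnital, hp.eq]

theorem IdemEquiv.blockDiagonal_succ {p : Matrix m m R} (hp : IsIdempotentElem p) (N : ℕ) :
    IdemEquiv (blockDiagonal fun _ : Fin (N + 1) => p)
      (.fromBlocks (blockDiagonal fun _ : Fin N => p) 0 0 p) := by
  let e : (m × Fin N) ⊕ m ≃ m × Fin (N + 1) :=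
    ((Equiv.sumCongr (.refl _) (Equiv.prodUnique m (Fin 1)).symm).trans
      (Equiv.prodSumDistrib m (Fin N) (Fin 1)).symm).trans
      (Equiv.prodCongr (.refl m) finSumFinEquiv)
  have he : (blockDiagonal fun _ : Fin (N + 1) => p).submatrix e e
      = .fromBlocks (blockDiagonal fun _ : Fin N => p) 0 0 p := by
    ext (⟨i, a⟩ | i) (⟨j, b⟩ | j)
    · simp [e, blockDiagonal_apply]
    · simp [e, blockDiagonal_apply, Fin.ext_iff, a.isLt.ne]
    · simp [e, blockDiagonal_apply, Fin.ext_iff, b.isLt.ne']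
    · simp [e, blockDiagonal_apply]
  rw [← he]
  exact (IdemEquiv.submatrix (isIdempotentElem_blockDiagonal fun _ => hp) e).symm

end Idempotents

section Retracts

open Matrix

variable {R : Type*} [NonUnitalRing R] {k l m n : Type*} [Fintype k] [Fintype l] [Fintype m]
  [Fintype n] {e : Matrix k k R} {f : Matrix l l R} {p : Matrix m m R}

/-- Invertibility in the corner ring `p M(R) p`, for `u` in that ring. -/
def IsCornerUnit (p u : Matrix m m R) : Prop :=
  ∃ w ∈ idemHom p p, u * w = p ∧ w * u = p

/-- The pair `(σ, π)` exhibits `p` as a direct summand of `e`; the complementary summand is the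
idempotent `e - σ * π`. -/
structure IsRetract (e : Matrix k k R) (p : Matrix m m R) (σ : Matrix k m R) (π : Matrix m k R) :
    Prop where
  section_mem : σ ∈ idemHom e p
  retraction_mem : π ∈ idemHom p e
  retraction_mul_section : π * σ = p

namespace IsRetract

variable {σ σ' σ₀ : Matrix k m R} {π π' π₀ : Matrix m k R} {S : Matrix k l R} {T : Matrix l k R}

theorem compl_mul_compl (he : IsIdempotentElem e) (h : IsRetract e p σ π)
    (h' : IsRetract e p σ' π') :
    (e - σ * π) * (e - σ' * π') = e - σ * π - σ' * π' + σ * (π * σ') * π' := by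
  rw [Matrix.sub_mul, Matrix.mul_sub, Matrix.mul_sub, he.eq, ← Matrix.mul_assoc e,
    h'.section_mem.1, Matrix.mul_assoc σ π e, h.retraction_mem.2]
  simp only [Matrix.mul_assoc]
  abel

theorem isIdempotentElem_compl (he : IsIdempotentElem e) (h : IsRetract e p σ π) :
    IsIdempotentElem (e - σ * π) := by
  rw [IsIdempotentElem, compl_mul_compl he h h, h.retraction_mul_section, h.section_mem.2]
  abel

theorem of_mul_eq (hp : IsIdempotentElem p) (hπ : π * e = π) (hσ : e * σ = σ) (h : π * σ = p) :
    IsRetract e p (σ * p) (p * π) where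
  section_mem := ⟨by rw [← Matrix.mul_assoc, hσ], by rw [Matrix.mul_assoc, hp.eq]⟩
  retraction_mem := ⟨by rw [← Matrix.mul_assoc, hp.eq], by rw [Matrix.mul_assoc, hπ]⟩
  retraction_mul_section := by
    rw [Matrix.mul_assoc, ← Matrix.mul_assoc π, h, hp.eq, hp.eq]

theorem compl_idemEquiv_of_retraction (he : IsIdempotentElem e) (h : IsRetract e p σ π)
    (h' : IsRetract e p σ' π) : IdemEquiv (e - σ * π) (e - σ' * π) := by
  refine .of_mul_eq (h.isIdempotentElem_compl he) (h'.isIdempotentElem_compl he)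
    (x := e - σ' * π) (y := e - σ * π) ?_ ?_
  · rw [compl_mul_compl he h' h, h.retraction_mul_section, h'.section_mem.2]
    abel
  · rw [compl_mul_compl he h h', h'.retraction_mul_section, h.section_mem.2]
    abel

theorem compl_idemEquiv_of_section (he : IsIdempotentElem e) (h : IsRetract e p σ π)
    (h' : IsRetract e p σ π') : IdemEquiv (e - σ * π) (e - σ * π') := by
  refine .of_mul_eq (h.isIdempotentElem_compl he) (h'.isIdempotentElem_compl he)
    (x := e - σ * π) (y := e - σ * π') ?_ ?_
  · rw [compl_mul_compl he h h', h.retraction_mul_section, h.section_mem.2]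
    abel
  · rw [compl_mul_compl he h' h, h'.retraction_mul_section, h'.section_mem.2]
    abel

theorem compl_idemEquiv (he : IsIdempotentElem e) (h : IsRetract e p σ π)
    (h' : IsRetract e p σ' π') (hu : IsCornerUnit p (π * σ')) :
    IdemEquiv (e - σ * π) (e - σ' * π') := by
  obtain ⟨w, hw, hu_mul, hw_mul⟩ := hu
  have hσ'w : IsRetract e p (σ' * w) π :=
    ⟨mul_mem_idemHom h'.section_mem hw, h.retraction_mem, by rw [← Matrix.mul_assoc, hu_mul]⟩
  have hwπ : IsRetract e p σ' (w * π) :=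
    ⟨h'.section_mem, mul_mem_idemHom hw h.retraction_mem, by rw [Matrix.mul_assoc, hw_mul]⟩
  have h_mid := h.compl_idemEquiv_of_retraction he hσ'w
  rw [Matrix.mul_assoc] at h_mid
  exact h_mid.trans (hwπ.compl_idemEquiv_of_section he h')

theorem isIdempotentElem_summand (h : IsRetract e p σ π) : IsIdempotentElem p := by
  rw [IsIdempotentElem]
  nth_rw 2 [← h.retraction_mul_section]
  rw [← Matrix.mul_assoc, h.retraction_mem.1, h.retraction_mul_section]

section Complement

variable {q : Matrix n n R} {x : Matrix k n R} {y : Matrix n k R}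

theorem mem_idemHom_of_compl_left (he : IsIdempotentElem e) (h : IsRetract e p σ π)
    (hx : x ∈ idemHom (e - σ * π) q) : x ∈ idemHom e q := by
  refine ⟨?_, hx.2⟩
  rw [← hx.1, ← Matrix.mul_assoc, Matrix.mul_sub, he.eq, ← Matrix.mul_assoc, h.section_mem.1]

theorem mem_idemHom_of_compl_right (he : IsIdempotentElem e) (h : IsRetract e p σ π)
    (hy : y ∈ idemHom q (e - σ * π)) : y ∈ idemHom q e := by
  refine ⟨hy.1, ?_⟩
  rw [← hy.2, Matrix.mul_assoc, Matrix.sub_mul, he.eq, Matrix.mul_assoc, h.retraction_mem.2]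

theorem retraction_mul_eq_zero (h : IsRetract e p σ π) (hx : x ∈ idemHom (e - σ * π) q) :
    π * x = 0 := by
  rw [← hx.1, ← Matrix.mul_assoc, Matrix.mul_sub, h.retraction_mem.2, ← Matrix.mul_assoc,
    h.retraction_mul_section, h.retraction_mem.1, sub_self, Matrix.zero_mul]

theorem mul_section_eq_zero (h : IsRetract e p σ π) (hy : y ∈ idemHom q (e - σ * π)) :
    y * σ = 0 := by
  rw [← hy.2, Matrix.mul_assoc, Matrix.sub_mul, h.section_mem.1, Matrix.mul_assoc,
    h.retraction_mul_section, h.section_mem.2, sub_self, Matrix.mul_zero]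

end Complement

/-- Warfield's substitution: the three complements are compared through the common retraction
`d * T` with sections `σ + S * (c - T * σ)` and `S * c + σ₀`. -/
theorem compl_idemEquiv_of_isCornerUnit (he : IsIdempotentElem e) (h : IsRetract e p σ π)
    (h₀ : IsRetract e p σ₀ π₀) (hST : IsRetract (e - σ₀ * π₀) f S T) {c : Matrix l m R}
    {d : Matrix m l R} (hc : c ∈ idemHom f p) (hd : d ∈ idemHom p f) (hdc : d * c = p)
    (hu : IsCornerUnit p (π * (σ + S * (c - T * σ)))) :
    IdemEquiv (e - σ * π) (e - σ₀ * π₀) := by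
  have hS : S ∈ idemHom e f := h₀.mem_idemHom_of_compl_left he hST.section_mem
  have hT : T ∈ idemHom f e := h₀.mem_idemHom_of_compl_right he hST.retraction_mem
  have hπ₀S : π₀ * S = 0 := h₀.retraction_mul_eq_zero hST.section_mem
  have hTσ₀ : T * σ₀ = 0 := h₀.mul_section_eq_zero hST.retraction_mem
  have hT_mul (x : Matrix l m R) (hx : f * x = x) : T * (S * x) = x := by
    rw [← Matrix.mul_assoc, hST.retraction_mul_section, hx]
  have hdT : d * T ∈ idemHom p e := mul_mem_idemHom hd hT
  have hTσ : T * σ ∈ idemHom f p := mul_mem_idemHom hT h.section_mem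
  have h₁ : IsRetract e p (σ + S * (c - T * σ)) (d * T) :=
    ⟨add_mem h.section_mem (mul_mem_idemHom hS (sub_mem hc hTσ)), hdT, by
      rw [Matrix.mul_assoc, Matrix.mul_add, hT_mul _ (sub_mem hc hTσ).1, add_sub_cancel, hdc]⟩
  have h₂ : IsRetract e p (S * c + σ₀) (d * T) :=
    ⟨add_mem (mul_mem_idemHom hS hc) h₀.section_mem, hdT, by
      rw [Matrix.mul_assoc, Matrix.mul_add, hT_mul _ hc.1, hTσ₀, add_zero, hdc]⟩
  have h₂₀ : IsCornerUnit p (π₀ * (S * c + σ₀)) := by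
    have hp := self_mem_idemHom h₀.isIdempotentElem_summand
    rw [Matrix.mul_add, ← Matrix.mul_assoc, hπ₀S, Matrix.zero_mul, zero_add,
      h₀.retraction_mul_section]
    exact ⟨p, hp, hp.1, hp.1⟩
  exact ((h.compl_idemEquiv he h₁ hu).trans (h₁.compl_idemEquiv_of_retraction he h₂)).trans
    (h₀.compl_idemEquiv he h₂ h₂₀).symm

end IsRetract

theorem fromCols_mem_idemHom_iff {c : Matrix n n R} {x₁ : Matrix k m R} {x₂ : Matrix k n R} :
    fromCols x₁ x₂ ∈ idemHom e (fromBlocks p 0 0 c) ↔ x₁ ∈ idemHom e p ∧ x₂ ∈ idemHom e c := by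
  simp only [mem_idemHom, mul_fromCols_nonUnital, fromCols_mul_fromBlocks_diagonal,
    fromCols_ext_iff, and_and_and_comm]

theorem fromRows_mem_idemHom_iff {c : Matrix n n R} {y₁ : Matrix m k R} {y₂ : Matrix n k R} :
    fromRows y₁ y₂ ∈ idemHom (fromBlocks p 0 0 c) e ↔ y₁ ∈ idemHom p e ∧ y₂ ∈ idemHom c e := by
  simp only [mem_idemHom, fromRows_mul_nonUnital, fromBlocks_diagonal_mul_fromRows,
    fromRows_ext_iff, and_and_and_comm]

theorem idemEquiv_fromBlocks_iff (he : IsIdempotentElem e) {c : Matrix n n R} :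
    IdemEquiv e (fromBlocks p 0 0 c) ↔
      ∃ σ π, IsRetract e p σ π ∧ IdemEquiv (e - σ * π) c := by
  constructor
  · rintro ⟨x, hx, y, hy, hxy, hyx⟩
    obtain ⟨x₁, x₂, rfl⟩ : ∃ x₁ x₂, x = fromCols x₁ x₂ := ⟨_, _, (fromCols_toCols x).symm⟩
    obtain ⟨y₁, y₂, rfl⟩ : ∃ y₁ y₂, y = fromRows y₁ y₂ := ⟨_, _, (fromRows_toRows y).symm⟩
    rw [fromCols_mem_idemHom_iff] at hx
    rw [fromRows_mem_idemHom_iff] at hy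
    rw [fromCols_mul_fromRows_nonUnital] at hxy
    rw [fromRows_mul_fromCols_nonUnital, fromBlocks_inj] at hyx
    obtain ⟨h₁₁, -, -, h₂₂⟩ := hyx
    have h_compl : e - x₁ * y₁ = x₂ * y₂ := sub_eq_of_eq_add' hxy.symm
    refine ⟨x₁, y₁, ⟨hx.1, hy.1, h₁₁⟩, x₂, ⟨?_, hx.2.2⟩, y₂, ⟨hy.2.1, ?_⟩, h_compl.symm, h₂₂⟩
    · rw [h_compl, Matrix.mul_assoc, h₂₂, hx.2.2]
    · rw [h_compl, ← Matrix.mul_assoc, h₂₂, hy.2.1]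
  · rintro ⟨σ, π, h, x, hx, y, hy, hxy, hyx⟩
    refine ⟨fromCols σ x, fromCols_mem_idemHom_iff.2
        ⟨h.section_mem, h.mem_idemHom_of_compl_left he hx⟩, fromRows π y,
      fromRows_mem_idemHom_iff.2 ⟨h.retraction_mem, h.mem_idemHom_of_compl_right he hy⟩, ?_, ?_⟩
    · rw [fromCols_mul_fromRows_nonUnital, hxy, add_sub_cancel]
    · rw [fromRows_mul_fromCols_nonUnital, h.retraction_mul_section, hyx,
        h.retraction_mul_eq_zero hx, h.mul_section_eq_zero hy]

end Retracts

section IdemClass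

open Matrix

/-- An idempotent matrix over `R` with an arbitrary finite index type. -/
structure IdemMatrix (R : Type*) [NonUnitalRing R] where
  index : Type
  [fintype : Fintype index]
  mat : Matrix index index R
  isIdempotentElem : IsIdempotentElem mat

attribute [instance] IdemMatrix.fintype

/-- Equivalence of idempotents, as a setoid on all idempotent matrices over `R`. -/
def idemMatrixSetoid (R : Type*) [NonUnitalRing R] : Setoid (IdemMatrix R) where
  r p q := IdemEquiv p.mat q.mat
  iseqv := ⟨fun p => .refl p.isIdempotentElem, .symm, .trans⟩

/-- The monoid `V(R)` of equivalence classes of idempotent matrices over `R`, with addition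
induced by the direct sum. -/
def IdemClass (R : Type*) [NonUnitalRing R] : Type _ :=
  Quotient (idemMatrixSetoid R)

variable {R : Type*} [NonUnitalRing R] {k m n : Type} [Fintype k] [Fintype m] [Fintype n]

/-- The class in `V(R)` of an idempotent matrix. -/
def idemClass (p : Matrix m m R) (hp : IsIdempotentElem p) : IdemClass R :=
  Quotient.mk (idemMatrixSetoid R) ⟨m, p, hp⟩

theorem idemClass_eq_iff {p : Matrix m m R} {q : Matrix n n R} {hp : IsIdempotentElem p}
    {hq : IsIdempotentElem q} : idemClass p hp = idemClass q hq ↔ IdemEquiv p q :=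
  Quotient.eq (r := idemMatrixSetoid R)

namespace IdemClass

@[elab_as_elim]
theorem ind {motive : IdemClass R → Prop}
    (h : ∀ (m : Type) [Fintype m] (p : Matrix m m R) (hp : IsIdempotentElem p),
      motive (idemClass p hp)) (a : IdemClass R) : motive a :=
  Quotient.ind (fun p => h p.index p.mat p.isIdempotentElem) a

instance : Add (IdemClass R) where
  add := Quotient.map₂
    (fun p q => ⟨p.index ⊕ q.index, fromBlocks p.mat 0 0 q.mat,
      isIdempotentElem_fromBlocks p.isIdempotentElem q.isIdempotentElem⟩)
    (fun _ _ h _ _ h' => IdemEquiv.fromBlocks h h')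

instance : Zero (IdemClass R) where
  zero := idemClass (0 : Matrix Empty Empty R) (Matrix.mul_zero 0)

protected theorem add_comm (a b : IdemClass R) : a + b = b + a := by
  induction a using ind with | _ m p hp
  induction b using ind with | _ n q hq
  exact idemClass_eq_iff.2 (.fromBlocks_comm hp hq)

protected theorem add_assoc (a b c : IdemClass R) : a + b + c = a + (b + c) := by
  induction a using ind with | _ m p hp
  induction b using ind with | _ n q hq
  induction c using ind with | _ k r hr
  exact idemClass_eq_iff.2 (.fromBlocks_assoc hp hq hr)

protected theorem zero_add (a : IdemClass R) : 0 + a = a := by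
  induction a using ind with | _ m p hp
  exact idemClass_eq_iff.2 (.zero_fromBlocks hp)

instance : AddCommMonoid (IdemClass R) where
  add_assoc := IdemClass.add_assoc
  zero_add := IdemClass.zero_add
  add_zero a := (IdemClass.add_comm a 0).trans (IdemClass.zero_add a)
  add_comm := IdemClass.add_comm
  nsmul := nsmulRec

end IdemClass

theorem idemClass_add {p : Matrix m m R} {q : Matrix n n R} (hp : IsIdempotentElem p)
    (hq : IsIdempotentElem q) :
    idemClass p hp + idemClass q hq
      = idemClass (fromBlocks p 0 0 q) (isIdempotentElem_fromBlocks hp hq) :=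
  rfl

theorem idemClass_blockDiagonal {p : Matrix m m R} (hp : IsIdempotentElem p) (N : ℕ) :
    idemClass (blockDiagonal fun _ : Fin N => p) (isIdempotentElem_blockDiagonal fun _ => hp)
      = N • idemClass p hp := by
  induction N with
  | zero =>
    rw [zero_nsmul]
    exact idemClass_eq_iff.2 (.of_mul_eq (isIdempotentElem_blockDiagonal fun _ => hp)
      (Matrix.mul_zero 0) (x := 0) (y := 0) (Subsingleton.elim _ _) (Subsingleton.elim _ _))
  | succ N ih =>
    rw [succ_nsmul, ← ih, idemClass_add]
    exact idemClass_eq_iff.2 (.blockDiagonal_succ hp N)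

theorem IsRetract.idemClass_eq_add {e : Matrix k k R} {p : Matrix m m R} {σ : Matrix k m R}
    {π : Matrix m k R} (h : IsRetract e p σ π) (hp : IsIdempotentElem p)
    (he : IsIdempotentElem e) :
    idemClass e he = idemClass p hp + idemClass (e - σ * π) (h.isIdempotentElem_compl he) :=
  idemClass_eq_iff.2 <| (idemEquiv_fromBlocks_iff he).2
    ⟨σ, π, h, .refl (h.isIdempotentElem_compl he)⟩

theorem exists_isRetract_of_idemClass_eq_add {e : Matrix k k R} {p : Matrix m m R}
    {he : IsIdempotentElem e} {hp : IsIdempotentElem p} {b : IdemClass R}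
    (h : idemClass e he = idemClass p hp + b) :
    ∃ (σ : Matrix k m R) (π : Matrix m k R) (hσπ : IsRetract e p σ π),
      b = idemClass (e - σ * π) (hσπ.isIdempotentElem_compl he) := by
  induction b using IdemClass.ind with | _ n c hc
  rw [idemClass_add, idemClass_eq_iff, idemEquiv_fromBlocks_iff he] at h
  obtain ⟨σ, π, hσπ, hc_equiv⟩ := h
  exact ⟨σ, π, hσπ, idemClass_eq_iff.2 hc_equiv.symm⟩

end IdemClass

section StablyLE

variable {M : Type*} [AddCommMonoid M]

/-- `a` is a summand of `b` up to adding the same element to both sides. -/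
def StablyLE (a b : M) : Prop :=
  ∃ r s, a + r + s = b + s

theorem StablyLE.trans {a b c : M} (hab : StablyLE a b) (hbc : StablyLE b c) : StablyLE a c := by
  obtain ⟨r, s, hrs⟩ := hab
  obtain ⟨r', s', hrs'⟩ := hbc
  refine ⟨r + r', s + s', ?_⟩
  calc a + (r + r') + (s + s') = (a + r + s) + (r' + s') := by abel
    _ = (b + r' + s') + s := by rw [hrs]; abel
    _ = c + (s + s') := by rw [hrs']; abel

theorem StablyLE.nsmul {a b : M} (h : StablyLE a b) (n : ℕ) : StablyLE (n • a) (n • b) := by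
  obtain ⟨r, s, hrs⟩ := h
  exact ⟨n • r, n • s, by rw [← nsmul_add, ← nsmul_add, hrs, nsmul_add]⟩

theorem StablyLE.nsmul_of_le (a : M) {m n : ℕ} (h : m ≤ n) : StablyLE (m • a) (n • a) :=
  ⟨(n - m) • a, 0, by rw [← add_nsmul, Nat.add_sub_cancel' h]⟩

theorem exists_two_pow_nsmul_stablyLE {D E : Set M} (hDE : D ⊆ E)
    (hE : ∀ q ∈ E, ∃ p ∈ D, StablyLE (2 • p) q) {q : M} (hq : q ∈ E) (K : ℕ) :
    ∃ p ∈ D, StablyLE (2 ^ K • p) q := by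
  induction K with
  | zero =>
    obtain ⟨p, hp, hpq⟩ := hE q hq
    exact ⟨p, hp, (StablyLE.nsmul_of_le p one_le_two).trans hpq⟩
  | succ K ih =>
    obtain ⟨p, hp, hpq⟩ := ih
    obtain ⟨p', hp', hpp'⟩ := hE p (hDE hp)
    exact ⟨p', hp', by rw [pow_succ, mul_nsmul']; exact (hpp'.nsmul _).trans hpq⟩

theorem exists_nsmul_stablyLE {D E : Set M} (hDE : D ⊆ E)
    (hE : ∀ q ∈ E, ∃ p ∈ D, StablyLE (2 • p) q) {q : M} (hq : q ∈ E) (N : ℕ) :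
    ∃ p ∈ D, StablyLE (N • p) q := by
  obtain ⟨p, hp, hpq⟩ := exists_two_pow_nsmul_stablyLE hDE hE hq N
  exact ⟨p, hp, (StablyLE.nsmul_of_le p N.lt_two_pow_self.le).trans hpq⟩

theorem eq_of_nsmul_add_eq {a d : M} (hcancel : ∀ b c, a + (d + b) = a + c → d + b = c) (n : ℕ)
    {b c : M} (h : n • a + (d + b) = n • a + c) : d + b = c := by
  induction n with
  | zero => simpa using h
  | succ n ih =>
    have h_succ : a + (d + (n • a + b)) = a + (n • a + c) :=
      calc a + (d + (n • a + b)) = (n + 1) • a + (d + b) := by rw [succ_nsmul]; abel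
        _ = (n + 1) • a + c := h
        _ = a + (n • a + c) := by rw [succ_nsmul]; abel
    exact ih (by rw [← hcancel _ _ h_succ, add_left_comm])

theorem StablyLE.exists_add_eq {a d q : M} (h : StablyLE d q)
    (hcancel : ∀ b c, a + (d + b) = a + c → d + b = c)
    (hgen : ∀ s : M, ∃ n : ℕ, ∃ t, s + t = n • a) : ∃ r, d + r = q := by
  obtain ⟨r, s, hrs⟩ := h
  obtain ⟨n, t, hst⟩ := hgen s
  refine ⟨r, eq_of_nsmul_add_eq hcancel n ?_⟩
  rw [← hst, add_comm, add_comm _ q, ← add_assoc, ← add_assoc, hrs]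

end StablyLE

section BlockRowsCols

open Matrix

variable {R : Type*} {k l m n ι : Type*}

/-- The block row matrix with blocks `X i`, with the same indexing convention as
`Matrix.blockDiagonal`. -/
def blockRow (X : ι → Matrix n m R) : Matrix n (m × ι) R :=
  of fun i ja => X ja.2 i ja.1

/-- The block column matrix with blocks `Y i`, with the same indexing convention as
`Matrix.blockDiagonal`, as an equivalence. -/
def blockCol : (ι → Matrix m n R) ≃ Matrix (m × ι) n R where
  toFun Y := of fun ia j => Y ia.2 ia.1 j
  invFun C i := of fun a j => C (a, i) j

@[simp]
theorem blockRow_apply (X : ι → Matrix n m R) (i : n) (ja : m × ι) :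
    blockRow X i ja = X ja.2 i ja.1 :=
  rfl

@[simp]
theorem blockCol_apply (Y : ι → Matrix m n R) (ia : m × ι) (j : n) :
    blockCol Y ia j = Y ia.2 ia.1 j :=
  rfl

variable [NonUnitalRing R] [Fintype m]

theorem mul_blockRow (x : Matrix l m R) (X : ι → Matrix m n R) :
    x * blockRow X = blockRow fun i => x * X i :=
  rfl

theorem blockCol_mul (Y : ι → Matrix n m R) (y : Matrix m l R) :
    blockCol Y * y = blockCol fun i => Y i * y :=
  rfl

variable [Fintype ι]

theorem blockRow_mul_blockCol (X : ι → Matrix k m R) (Y : ι → Matrix m n R) :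
    blockRow X * blockCol Y = ∑ i, X i * Y i := by
  ext i j
  simp [mul_apply, Matrix.sum_apply, Fintype.sum_prod_type_right]

variable [DecidableEq ι]

theorem blockRow_mul_blockDiagonal (X : ι → Matrix n m R) (p : ι → Matrix m k R) :
    blockRow X * blockDiagonal p = blockRow fun i => X i * p i := by
  ext i ⟨j, b⟩
  simp [mul_apply, blockDiagonal_apply, Fintype.sum_prod_type_right]

theorem blockDiagonal_mul_blockCol (p : ι → Matrix k m R) (Y : ι → Matrix m n R) :
    blockDiagonal p * blockCol Y = blockCol fun i => p i * Y i := by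
  ext ⟨i, a⟩ j
  simp [mul_apply, blockDiagonal_apply, Fintype.sum_prod_type_right]

variable [Fintype n]

theorem blockRow_mem_idemHom {p : Matrix n n R} {q : ι → Matrix m m R} {X : ι → Matrix n m R}
    (hX : ∀ i, X i ∈ idemHom p (q i)) : blockRow X ∈ idemHom p (blockDiagonal q) := by
  refine ⟨?_, ?_⟩
  · rw [mul_blockRow, funext fun i => (hX i).1]
  · rw [blockRow_mul_blockDiagonal, funext fun i => (hX i).2]

theorem blockCol_mem_idemHom_iff {p : Matrix n n R} {q : ι → Matrix m m R}
    {Y : ι → Matrix m n R} :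
    blockCol Y ∈ idemHom (blockDiagonal q) p ↔ ∀ i, Y i ∈ idemHom (q i) p := by
  simp only [mem_idemHom, blockDiagonal_mul_blockCol, blockCol_mul, blockCol.apply_eq_iff_eq,
    funext_iff, forall_and]

end BlockRowsCols

section TraceIdeal

open Matrix

variable {R : Type*} [NonUnitalRing R] {k l m n : Type*} [Fintype m] {p : Matrix m m R}

/-- The matrices of the form `∑ i, X i * p * Y i`: the trace ideal of the projective module
defined by `p`, for rectangular matrices of a given size. -/
def traceIdeal (p : Matrix m m R) (n l : Type*) : AddSubgroup (Matrix n l R) where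
  carrier := {z | ∃ (M : ℕ) (X : Fin M → Matrix n m R) (Y : Fin M → Matrix m l R),
    z = ∑ i, X i * p * Y i}
  zero_mem' := ⟨0, Fin.elim0, Fin.elim0, by simp⟩
  add_mem' := by
    rintro _ _ ⟨M, X, Y, rfl⟩ ⟨M', X', Y', rfl⟩
    exact ⟨M + M', Fin.append X X', Fin.append Y Y', by simp [Fin.sum_univ_add]⟩
  neg_mem' := by
    rintro _ ⟨M, X, Y, rfl⟩
    exact ⟨M, -X, Y, by simp⟩

theorem mul_mul_mem_traceIdeal (x : Matrix n m R) (y : Matrix m l R) :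
    x * p * y ∈ traceIdeal p n l :=
  ⟨1, fun _ => x, fun _ => y, by simp⟩

theorem mul_mem_traceIdeal_left [Fintype n] (x : Matrix k n R) {z : Matrix n l R}
    (hz : z ∈ traceIdeal p n l) : x * z ∈ traceIdeal p k l := by
  obtain ⟨M, X, Y, rfl⟩ := hz
  exact ⟨M, fun i => x * X i, Y, by simp only [Matrix.mul_sum, Matrix.mul_assoc]⟩

theorem mul_mem_traceIdeal_right [Fintype l] {z : Matrix n l R} (hz : z ∈ traceIdeal p n l)
    (y : Matrix l k R) : z * y ∈ traceIdeal p n k := by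
  obtain ⟨M, X, Y, rfl⟩ := hz
  exact ⟨M, X, fun i => Y i * y, by simp only [Matrix.sum_mul, Matrix.mul_assoc]⟩

theorem exists_isRetract_of_mem_traceIdeal [Fintype n] (hp : IsIdempotentElem p)
    {s : Matrix n n R} (hs : IsIdempotentElem s) (h : s ∈ traceIdeal p n n) :
    ∃ (M : ℕ) (σ : Matrix (m × Fin M) n R) (π : Matrix n (m × Fin M) R),
      IsRetract (blockDiagonal fun _ : Fin M => p) s σ π := by
  obtain ⟨M, X, Y, hXY⟩ := h
  refine ⟨M, _, _, .of_mul_eq hs (π := blockRow fun i => X i * p)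
    (σ := blockCol fun i => p * Y i) ?_ ?_ ?_⟩
  · simp only [blockRow_mul_blockDiagonal, Matrix.mul_assoc, hp.eq]
  · simp only [blockDiagonal_mul_blockCol, ← Matrix.mul_assoc, hp.eq]
  · rw [blockRow_mul_blockCol, hXY]
    exact Finset.sum_congr rfl fun i _ => by
      rw [Matrix.mul_assoc, ← Matrix.mul_assoc p, hp.eq, Matrix.mul_assoc]

end TraceIdeal

section Polar

open Matrix

theorem isStrictlyPositive_mul_star_add_one_sub {B : Type*} [CStarAlgebra B] [PartialOrder B]
    [StarOrderedRing B] {p x y : B} (hp : IsStarProjection p) (hxy : x * y = p) :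
    IsStrictlyPositive (x * star x + (1 - p)) := by
  have hxx : 0 ≤ x * star x := mul_star_self_nonneg x
  have hp_compl : 0 ≤ 1 - p := hp.one_sub.nonneg
  have hp_le : p ≤ ‖y * star y‖ • (x * star x) :=
    calc p = x * (y * star y) * star x := by
          rw [← mul_assoc, hxy, mul_assoc, ← star_mul, hxy, hp.isSelfAdjoint.star_eq,
            hp.isIdempotentElem.eq]
      _ ≤ ‖y * star y‖ • (x * star x) := CStarAlgebra.star_right_conjugate_le_norm_smul
  have h_one_le : 1 ≤ (‖y * star y‖ + 1) • (x * star x + (1 - p)) :=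
    calc 1 = p + 0 + (0 + (1 - p)) := by abel
      _ ≤ ‖y * star y‖ • (x * star x) + x * star x + (‖y * star y‖ • (1 - p) + (1 - p)) := by
          have := smul_nonneg (norm_nonneg (y * star y)) hp_compl
          gcongr
      _ = _ := by rw [smul_add, add_smul, add_smul, one_smul, one_smul]
  have h_pos : 0 < ‖y * star y‖ + 1 := by positivity
  have h_unit : IsUnit ((‖y * star y‖ + 1) • (x * star x + (1 - p))) :=
    CStarAlgebra.isUnit_of_le 1 h_one_le
  exact ⟨add_nonneg hxx hp_compl, (isUnit_smul_iff (Units.mk0 _ h_pos.ne') _).1 h_unit⟩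

/-- The polar part of `x`, with `a = x x* + (1 - p)` in place of `x x*` so that `a ^ (-1/2)`
makes sense. -/
theorem exists_mul_mul_star_eq_of_mul_eq {B : Type*} [CStarAlgebra B] {p x y : B}
    (hp : IsStarProjection p) (hpx : p * x = x) (hxy : x * y = p) :
    ∃ t : B, p * (t * x) = t * x ∧ t * x * star (t * x) = p := by
  let _ := CStarAlgebra.spectralOrder B
  have _ := CStarAlgebra.spectralOrderedRing B
  have ha := isStrictlyPositive_mul_star_add_one_sub hp hxy
  set a := x * star x + (1 - p) with ha_def
  set t := a ^ (-(1 / 2) : ℝ)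
  have hxp : star x * p = star x := by
    rw [← hp.isSelfAdjoint.star_eq, ← star_mul, hpx]
  have hpa : p * a = x * star x := by
    rw [ha_def, mul_add, ← mul_assoc, hpx, mul_sub, mul_one, hp.isIdempotentElem.eq, sub_self,
      add_zero]
  have hap : a * p = x * star x := by
    rw [ha_def, add_mul, mul_assoc, hxp, sub_mul, one_mul, hp.isIdempotentElem.eq, sub_self,
      add_zero]
  have hts : star t = t := (IsSelfAdjoint.of_nonneg CFC.rpow_nonneg).star_eq
  have htp : t * p = p * t := Commute.cfc_nnreal (hap.trans hpa.symm) _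
  refine ⟨t, by rw [← mul_assoc, ← htp, mul_assoc, hpx], ?_⟩
  calc t * x * star (t * x) = t * (x * star x) * t := by
        rw [star_mul, hts]
        simp only [mul_assoc]
    _ = p * (t * a * t) := by rw [← hpa]; simp only [← mul_assoc, htp]
    _ = p := by rw [CFC.conjugate_rpow_neg_one_half a ha, mul_one]

theorem exists_mul_star_eq_of_mul_eq {B : Type*} [NonUnitalCStarAlgebra B] {p q x y : B}
    (hp : IsStarProjection p) (hpx : p * x = x) (hxq : x * q = x) (hxy : x * y = p) :
    ∃ v : B, p * v = v ∧ v * q = v ∧ v * star v = p := by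
  obtain ⟨t, hpt, ht⟩ := exists_mul_mul_star_eq_of_mul_eq (B := Unitization ℂ B)
    (hp.map (Unitization.inrNonUnitalStarAlgHom ℂ B)) (x := x) (y := y)
    (by rw [Unitization.inrNonUnitalStarAlgHom_apply, ← Unitization.inr_mul, hpx])
    (by rw [Unitization.inrNonUnitalStarAlgHom_apply, ← Unitization.inr_mul, hxy])
  obtain ⟨v, hv⟩ : ∃ v : B, (v : Unitization ℂ B) = t * x := ⟨(t * x).snd, by ext <;> simp⟩
  have hinj := Unitization.inr_injective (R := ℂ) (A := B)
  refine ⟨v, hinj ?_, hinj ?_, hinj ?_⟩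
  · rw [Unitization.inr_mul, hv]
    exact hpt
  · rw [Unitization.inr_mul, hv, mul_assoc, ← Unitization.inr_mul, hxq]
  · rw [Unitization.inr_mul, Unitization.inr_star, hv]
    exact ht

variable {A : Type*} [NonUnitalCStarAlgebra A] {m n : Type*} [Fintype m] [Fintype n]

theorem exists_mul_conjTranspose_eq_of_mul_eq_square {p q x y : Matrix n n A} (hp : IsProjM p)
    (hpx : p * x = x) (hxq : x * q = x) (hxy : x * y = p) :
    ∃ v : Matrix n n A, p * v = v ∧ v * q = v ∧ v * vᴴ = p := by
  let _ := CStarAlgebra.spectralOrder A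
  have _ := CStarAlgebra.spectralOrderedRing A
  exact exists_mul_star_eq_of_mul_eq (B := CStarMatrix n n A) (p := CStarMatrix.ofMatrix p)
    ⟨hp.2, hp.1⟩ hpx hxq hxy

theorem exists_mul_conjTranspose_eq_of_mul_eq {p : Matrix m m A} {q : Matrix n n A}
    {x : Matrix m n A} {y : Matrix n m A} (hp : IsProjM p) (hpx : p * x = x) (hxq : x * q = x)
    (hxy : x * y = p) : ∃ v : Matrix m n A, p * v = v ∧ v * q = v ∧ v * vᴴ = p := by
  obtain ⟨V, hpV, hVq, hVV⟩ := exists_mul_conjTranspose_eq_of_mul_eq_square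
    (p := fromBlocks p 0 0 (0 : Matrix n n A)) (q := fromBlocks (0 : Matrix m m A) 0 0 q)
    (x := fromBlocks 0 x 0 0) (y := fromBlocks 0 0 y 0)
    ⟨by simp [fromBlocks_conjTranspose, hp.1], by simp [fromBlocks_multiply, hp.2]⟩
    (by simp [fromBlocks_multiply, hpx]) (by simp [fromBlocks_multiply, hxq])
    (by simp [fromBlocks_multiply, hxy])
  rw [← fromBlocks_toBlocks V, fromBlocks_multiply, fromBlocks_inj] at hpV hVq
  rw [← fromBlocks_toBlocks V, fromBlocks_conjTranspose, fromBlocks_multiply,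
    fromBlocks_inj] at hVV
  have hV₁₁ : V.toBlocks₁₁ = 0 := by simpa using hVq.1.symm
  exact ⟨V.toBlocks₁₂, by simpa using hpV.2.1, by simpa using hVq.2.1, by simpa [hV₁₁] using hVV.1⟩

theorem subEquiv_of_isRetract {p : Matrix m m A} {q : Matrix n n A} {σ : Matrix n m A}
    {π : Matrix m n A} (hp : IsProjM p) (h : IsRetract q p σ π) : SubEquiv p q := by
  obtain ⟨v, hpv, hvq, hvv⟩ := exists_mul_conjTranspose_eq_of_mul_eq hp h.retraction_mem.1
    h.retraction_mem.2 h.retraction_mul_section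
  refine ⟨vᴴ * v, ⟨?_, ?_⟩, ⟨v, hvv, rfl⟩, ?_⟩
  · rw [conjTranspose_mul, conjTranspose_conjTranspose]
  · rw [Matrix.mul_assoc, ← Matrix.mul_assoc v, hvv, hpv]
  · rw [Matrix.mul_assoc, hvq]

end Polar

section CornerUnits

open Filter Topology Matrix

theorem eventually_isQuasiregular_nhds_zero (B : Type*) [NonUnitalCStarAlgebra B] :
    ∀ᶠ x : B in 𝓝 0, IsQuasiregular x := by
  have hcont : Continuous fun x : B => (1 + x : Unitization ℂ B) :=
    continuous_const.add Unitization.isometry_inr.continuous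
  have hunit : ∀ᶠ x : B in 𝓝 0, IsUnit (1 + x : Unitization ℂ B) :=
    hcont.continuousAt.eventually (Units.isOpen.mem_nhds (by simp))
  exact hunit.mono fun x hx => (isQuasiregular_iff_isUnit' ℂ).2 hx

variable {A : Type*} [NonUnitalCStarAlgebra A] {m : Type*} [Fintype m] {p : Matrix m m A}

theorem eventually_isQuasiregular_matrix_nhds_zero (A m : Type*) [NonUnitalCStarAlgebra A]
    [Fintype m] : ∀ᶠ x : Matrix m m A in 𝓝 0, IsQuasiregular x := by
  let _ := CStarAlgebra.spectralOrder A
  have _ := CStarAlgebra.spectralOrderedRing A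
  exact eventually_isQuasiregular_nhds_zero (CStarMatrix m m A)

theorem isCornerUnit_of_isQuasiregular {R : Type*} [NonUnitalRing R] {p u : Matrix m m R}
    (hp : IsIdempotentElem p) (hu : u ∈ idemHom p p) (h : IsQuasiregular (u - p)) :
    IsCornerUnit p u := by
  obtain ⟨y, hy_right, hy_left⟩ := isQuasiregular_iff.1 h
  have huyp : u * y * p = p - u := by
    have h_compress : p * (y + (u - p) + (u - p) * y) * p = 0 := by
      rw [hy_right, Matrix.mul_zero, Matrix.zero_mul]
    simp only [Matrix.mul_add, Matrix.add_mul, Matrix.mul_sub, Matrix.sub_mul, hu.1, hu.2, hp.eq,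
      ← Matrix.mul_assoc] at h_compress
    rw [← sub_eq_zero, ← h_compress]
    abel
  have hpyu : p * y * u = p - u := by
    have h_compress : p * (u - p + y + y * (u - p)) * p = 0 := by
      rw [hy_left, Matrix.mul_zero, Matrix.zero_mul]
    simp only [Matrix.mul_add, Matrix.add_mul, Matrix.mul_sub, Matrix.sub_mul, hu.1, hu.2, hp.eq,
      Matrix.mul_assoc] at h_compress
    rw [Matrix.mul_assoc, ← sub_eq_zero, ← h_compress]
    abel
  refine ⟨p + p * y * p, add_mem (self_mem_idemHom hp) ⟨?_, ?_⟩, ?_, ?_⟩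
  · rw [← Matrix.mul_assoc, ← Matrix.mul_assoc, hp.eq]
  · rw [Matrix.mul_assoc, hp.eq]
  · rw [Matrix.mul_add, ← Matrix.mul_assoc, ← Matrix.mul_assoc, hu.2, huyp, add_sub_cancel]
  · rw [Matrix.add_mul, Matrix.mul_assoc, hu.1, hpyu, add_sub_cancel]

theorem eventually_isCornerUnit (hp : IsIdempotentElem p) :
    ∀ᶠ u in 𝓝 p, u ∈ idemHom p p → IsCornerUnit p u := by
  have hsub : Tendsto (fun u => u - p) (𝓝 p) (𝓝 0) := by
    simpa using (tendsto_id (x := 𝓝 p)).sub_const p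
  filter_upwards [hsub.eventually (eventually_isQuasiregular_matrix_nhds_zero A m)] with u hu hup
  exact isCornerUnit_of_isQuasiregular hp hup hu

end CornerUnits

section Simple

open Filter Topology Matrix

variable {A : Type*} [NonUnitalCStarAlgebra A] {l m n : Type*} [Fintype m] {p : Matrix m m A}

theorem continuous_matrix_single {X : Type*} [TopologicalSpace X] [Zero X] [DecidableEq l]
    [DecidableEq n] (i : n) (j : l) : Continuous (single i j : X → Matrix n l X) :=
  continuous_matrix fun a b => by
    by_cases h : i = a ∧ j = b
    · simpa only [single_apply, if_pos h] using continuous_id'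
    · simpa only [single_apply, if_neg h] using continuous_const

theorem mul_mem_topologicalClosure_traceIdeal_left [Fintype n] (x : Matrix n n A)
    {z : Matrix n l A} (hz : z ∈ (traceIdeal p n l).topologicalClosure) :
    x * z ∈ (traceIdeal p n l).topologicalClosure :=
  map_mem_closure (continuous_const.matrix_mul continuous_id) hz
    fun _ => mul_mem_traceIdeal_left x

theorem mul_mem_topologicalClosure_traceIdeal_right [Fintype l] {z : Matrix n l A}
    (hz : z ∈ (traceIdeal p n l).topologicalClosure) (y : Matrix l l A) :
    z * y ∈ (traceIdeal p n l).topologicalClosure :=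
  map_mem_closure (f := fun w => w * y) (continuous_id.matrix_mul continuous_const) hz
    fun _ hw => mul_mem_traceIdeal_right hw y

theorem eq_zero_of_forall_mul_apply_mul_eq_zero {R : Type*} [NonUnitalRing R] {p : Matrix m m R}
    (hp : IsIdempotentElem p) (h : ∀ x a b y, x * p a b * y = 0) : p = 0 := by
  have hppp : p = p * p * p := by rw [hp.eq, hp.eq]
  ext i j
  rw [hppp, mul_apply]
  simp only [mul_apply, Finset.sum_mul, h, Finset.sum_const_zero, Matrix.zero_apply]

theorem single_mem_topologicalClosure_traceIdeal [Finite n] [Finite l] [DecidableEq n]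
    [DecidableEq l] (hsimple : IsSimpleCStarAlgebra A) (hp : IsIdempotentElem p) (hp0 : p ≠ 0)
    (i : n) (j : l) (a : A) : single i j a ∈ (traceIdeal p n l).topologicalClosure := by
  classical
  have := Fintype.ofFinite n
  have := Fintype.ofFinite l
  let I := (traceIdeal p n l).topologicalClosure
  let J : AddSubgroup A := ⨅ (i : n) (j : l), I.comap (singleAddMonoidHom i j)
  have mem_J {a : A} : a ∈ J ↔ ∀ i j, single i j a ∈ I := by
    simp [J, AddSubgroup.mem_iInf]
  have hJ_closed : IsClosed (J : Set A) := by
    simp only [J, AddSubgroup.coe_iInf]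
    exact isClosed_iInter fun i => isClosed_iInter fun j =>
      (traceIdeal p n l).isClosed_topologicalClosure.preimage
        (continuous_matrix_single i j)
  have hJ_left (x) (hx : x ∈ J) (a : A) : a * x ∈ J := mem_J.2 fun i j => by
    rw [← single_mul_single_same a i i j x]
    exact mul_mem_topologicalClosure_traceIdeal_left _ (mem_J.1 hx i j)
  have hJ_right (x) (hx : x ∈ J) (a : A) : x * a ∈ J := mem_J.2 fun i j => by
    rw [← single_mul_single_same x i j j a]
    exact mul_mem_topologicalClosure_traceIdeal_right (mem_J.1 hx i j) _
  have hJ_entry (x : A) (a b : m) (y : A) : x * p a b * y ∈ J := mem_J.2 fun i j =>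
    subset_closure (by rw [← single_mul_mul_single]; exact mul_mul_mem_traceIdeal _ _)
  rcases hsimple J hJ_closed J.zero_mem (fun _ hx _ hy => J.add_mem hx hy)
    (fun _ hx => J.neg_mem hx) hJ_left hJ_right with hJ | hJ
  · refine absurd (eq_zero_of_forall_mul_apply_mul_eq_zero hp fun x a b y => ?_) hp0
    exact hJ.subset (hJ_entry x a b y)
  · exact mem_J.1 (hJ.superset (Set.mem_univ a)) i j

theorem dense_traceIdeal [Finite n] [Finite l] (hsimple : IsSimpleCStarAlgebra A)
    (hp : IsIdempotentElem p) (hp0 : p ≠ 0) : Dense (traceIdeal p n l : Set (Matrix n l A)) := by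
  classical
  have := Fintype.ofFinite n
  have := Fintype.ofFinite l
  intro z
  rw [← AddSubgroup.topologicalClosure_coe, matrix_eq_sum_single z]
  exact sum_mem fun i _ => sum_mem fun j _ =>
    single_mem_topologicalClosure_traceIdeal hsimple hp hp0 i j _

theorem mem_traceIdeal_of_isIdempotentElem [Fintype n] (hsimple : IsSimpleCStarAlgebra A)
    (hp : IsIdempotentElem p) (hp0 : p ≠ 0) {s : Matrix n n A} (hs : IsIdempotentElem s) :
    s ∈ traceIdeal p n n := by
  have hcompress : Tendsto (fun z => s * z * s) (𝓝 s) (𝓝 s) := by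
    have hcont : Continuous fun z => s * z * s :=
      (continuous_const.matrix_mul continuous_id).matrix_mul continuous_const
    simpa only [hs.eq] using hcont.tendsto s
  obtain ⟨z, hz_mem, hz⟩ := ((mem_closure_iff_frequently.1
    (dense_traceIdeal hsimple hp hp0 s)).and_eventually
    (hcompress.eventually (eventually_isCornerUnit hs))).exists
  have hszs : s * z * s ∈ idemHom s s :=
    ⟨by simp only [← Matrix.mul_assoc, hs.eq], by rw [Matrix.mul_assoc, hs.eq]⟩
  obtain ⟨w, -, hw, -⟩ := hz hszs
  rw [← hw]
  exact mul_mem_traceIdeal_right (mul_mem_traceIdeal_right (mul_mem_traceIdeal_left s hz_mem) s) w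

end Simple

theorem exists_add_eq_nsmul_idemClass {A : Type*} [NonUnitalCStarAlgebra A]
    (hsimple : IsSimpleCStarAlgebra A) {m : Type} [Fintype m] {p : Matrix m m A}
    (hp : IsIdempotentElem p) (hp0 : p ≠ 0) (a : IdemClass A) :
    ∃ (M : ℕ) (t : IdemClass A), a + t = M • idemClass p hp := by
  induction a using IdemClass.ind with | _ n s hs
  obtain ⟨M, σ, π, h⟩ := exists_isRetract_of_mem_traceIdeal hp hs
    (mem_traceIdeal_of_isIdempotentElem hsimple hp hp0 hs)
  exact ⟨M, _, (h.idemClass_eq_add hs (isIdempotentElem_blockDiagonal fun _ => hp)).symm.trans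
    (idemClass_blockDiagonal hp M)⟩

section Cancellation

open Filter Topology Matrix

variable {A : Type*} [NonUnitalCStarAlgebra A]

/-- The left invertible morphisms from `p` to `f` are dense. For `f` the sum of `N` copies of
`p` this is the condition that the corner of `p` has topological stable rank at most `N`. -/
def DenseLeftInvertible {l m : Type*} [Fintype l] [Fintype m] (f : Matrix l l A)
    (p : Matrix m m A) : Prop :=
  ∀ x ∈ idemHom f p, x ∈ closure {c | c ∈ idemHom f p ∧ ∃ d ∈ idemHom p f, d * c = p}

theorem CornerTsrLe.denseLeftInvertible {m : Type*} [Fintype m] {p : Matrix m m A} {N : ℕ}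
    (h : CornerTsrLe p N) (hp : IsIdempotentElem p) :
    DenseLeftInvertible (blockDiagonal fun _ : Fin N => p) p := by
  intro x hx
  obtain ⟨Y, rfl⟩ := blockCol.surjective x
  have hY (i : Fin N) : p * Y i * p = Y i :=
    (mem_idemHom_self_iff hp).1 (blockCol_mem_idemHom_iff.1 hx i)
  let toBlockCol (c : Fin N → {x : Matrix m m A // p * x * p = x}) : Matrix (m × Fin N) m A :=
    blockCol fun i => c i
  have hcont : Continuous toBlockCol :=
    continuous_matrix fun ia j =>
      (continuous_subtype_val.comp (continuous_apply ia.2)).matrix_elem ia.1 j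
  refine map_mem_closure (f := toBlockCol) hcont (h fun i => ⟨Y i, hY i⟩) ?_
  rintro c ⟨d, hdc⟩
  refine ⟨blockCol_mem_idemHom_iff.2 fun i => (mem_idemHom_self_iff hp).2 (c i).2,
    blockRow fun i => d i, blockRow_mem_idemHom fun i => (mem_idemHom_self_iff hp).2 (d i).2, ?_⟩
  rw [blockRow_mul_blockCol, hdc]

theorem IsRetract.compl_idemEquiv_of_denseLeftInvertible {k l m : Type*} [Fintype k] [Fintype l]
    [Fintype m] {e : Matrix k k A} {f : Matrix l l A} {p : Matrix m m A} {σ σ₀ : Matrix k m A}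
    {π π₀ : Matrix m k A} {S : Matrix k l A} {T : Matrix l k A} (hdense : DenseLeftInvertible f p)
    (he : IsIdempotentElem e) (h : IsRetract e p σ π) (h₀ : IsRetract e p σ₀ π₀)
    (hST : IsRetract (e - σ₀ * π₀) f S T) : IdemEquiv (e - σ * π) (e - σ₀ * π₀) := by
  have hS := h₀.mem_idemHom_of_compl_left he hST.section_mem
  have hT := h₀.mem_idemHom_of_compl_right he hST.retraction_mem
  have hTσ : T * σ ∈ idemHom f p := mul_mem_idemHom hT h.section_mem
  have hlim : Tendsto (fun c => π * (σ + S * (c - T * σ))) (𝓝 (T * σ)) (𝓝 p) := by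
    have hcont : Continuous fun c => π * (σ + S * (c - T * σ)) :=
      continuous_const.matrix_mul (continuous_const.add
        (continuous_const.matrix_mul (continuous_id.sub continuous_const)))
    simpa only [sub_self, Matrix.mul_zero, add_zero, h.retraction_mul_section]
      using hcont.tendsto (T * σ)
  obtain ⟨c, ⟨hc, d, hd, hdc⟩, hu⟩ := ((mem_closure_iff_frequently.1
    (hdense _ hTσ)).and_eventually
    (hlim.eventually (eventually_isCornerUnit h.isIdempotentElem_summand))).exists
  exact h.compl_idemEquiv_of_isCornerUnit he h₀ hST hc hd hdc (hu (mul_mem_idemHom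
    h.retraction_mem (add_mem h.section_mem (mul_mem_idemHom hS (sub_mem hc hTσ)))))

theorem IdemClass.add_left_cancel_of_denseLeftInvertible {l m : Type} [Fintype l] [Fintype m]
    {f : Matrix l l A} {p : Matrix m m A} {hf : IsIdempotentElem f} {hp : IsIdempotentElem p}
    (hdense : DenseLeftInvertible f p) {b c : IdemClass A}
    (h : idemClass p hp + (idemClass f hf + b) = idemClass p hp + c) :
    idemClass f hf + b = c := by
  induction c using IdemClass.ind with | _ n c hc
  have he := isIdempotentElem_fromBlocks hp hc
  obtain ⟨σ, π, hσπ, hc_eq⟩ := exists_isRetract_of_idemClass_eq_add (he := he)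
    (idemClass_add hp hc).symm
  obtain ⟨σ₀, π₀, h₀, hfb_eq⟩ := exists_isRetract_of_idemClass_eq_add (he := he) h.symm
  obtain ⟨S, T, hST, -⟩ := exists_isRetract_of_idemClass_eq_add hfb_eq.symm
  rw [hc_eq, hfb_eq, idemClass_eq_iff]
  exact (hσπ.compl_idemEquiv_of_denseLeftInvertible hdense he h₀ hST).symm

theorem exists_isRetract_of_stablyLE (hsimple : IsSimpleCStarAlgebra A) {m n : Type} [Fintype m]
    [Fintype n] {p : Matrix m m A} {q : Matrix n n A} {hp : IsIdempotentElem p}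
    {hq : IsIdempotentElem q} (hp0 : p ≠ 0) {N : ℕ} (htsr : CornerTsrLe p N)
    (h : StablyLE (N • idemClass p hp) (idemClass q hq)) :
    ∃ σ π, IsRetract q (blockDiagonal fun _ : Fin N => p) σ π := by
  rw [← idemClass_blockDiagonal hp N] at h
  obtain ⟨r, hr⟩ := h.exists_add_eq
    (fun _ _ => IdemClass.add_left_cancel_of_denseLeftInvertible (htsr.denseLeftInvertible hp))
    (exists_add_eq_nsmul_idemClass hsimple hp hp0)
  obtain ⟨σ, π, hσπ, -⟩ := exists_isRetract_of_idemClass_eq_add hr.symm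
  exact ⟨σ, π, hσπ⟩

end Cancellation

section Projections

variable {A : Type*} [NonUnitalCStarAlgebra A] {m n : Type} [Fintype m] [Fintype n]

theorem IsProjM.nFold {ι : Type*} [Fintype ι] {p : Matrix ι ι A} (hp : IsProjM p) (N : ℕ) :
    IsProjM (nFold N p) :=
  ⟨by rw [_root_.nFold, Matrix.blockDiagonal_conjTranspose, hp.1],
    isIdempotentElem_blockDiagonal fun _ => hp.2⟩

theorem MvNEquiv.idemClass_eq {p : Matrix m m A} {q : Matrix n n A} (h : MvNEquiv p q)
    (hp : IsIdempotentElem p) (hq : IsIdempotentElem q) : idemClass p hp = idemClass q hq := by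
  obtain ⟨v, hvv, hvv'⟩ := h
  exact idemClass_eq_iff.2 (.of_mul_eq hp hq hvv hvv')

theorem stablyLE_of_mvNEquiv_dSum {k l : Type} [Fintype k] [Fintype l] {p : Matrix m m A}
    {q : Matrix n n A} {r : Matrix k k A} {s : Matrix l l A} (hp : IsProjM p) (hq : IsProjM q)
    (hr : IsProjM r) (hs : IsProjM s) (h : MvNEquiv (dSum (dSum (dSum p p) r) s) (dSum q s)) :
    StablyLE (2 • idemClass p hp.2) (idemClass q hq.2) := by
  refine ⟨idemClass r hr.2, idemClass s hs.2, ?_⟩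
  rw [two_nsmul]
  exact h.idemClass_eq _ _

end Projections

/-- Under the hypotheses of Blackadar's cancellation theorem, for every nonzero projection
`q` in a matrix algebra over the simple C*-algebra `A` there is `p ∈ P` with `N * p ≾ q`. -/
theorem exists_nFold_subEquiv {A : Type*} [NonUnitalCStarAlgebra A]
    (hsimple : IsSimpleCStarAlgebra A)
    (P : Set (Σ k : ℕ, Matrix (Fin k) (Fin k) A))
    (hP : ∀ p ∈ P, IsProjM p.2 ∧ p.2 ≠ 0)
    (hsmall : ∀ (l : ℕ) (q : Matrix (Fin l) (Fin l) A), IsProjM q → q ≠ 0 →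
      ∃ p ∈ P, ∃ (kr ks : ℕ) (r : Matrix (Fin kr) (Fin kr) A)
        (s : Matrix (Fin ks) (Fin ks) A), IsProjM r ∧ IsProjM s ∧
        MvNEquiv (dSum (dSum (dSum p.2 p.2) r) s) (dSum q s))
    (N : ℕ) (htsr : ∀ p ∈ P, CornerTsrLe p.2 N)
    (l : ℕ) (q : Matrix (Fin l) (Fin l) A) (hq : IsProjM q) (hq0 : q ≠ 0) :
    ∃ p ∈ P, SubEquiv (nFold N p.2) q := by
  let D : Set (IdemClass A) := {a | ∃ p ∈ P, ∃ hp : IsIdempotentElem p.2, a = idemClass p.2 hp}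
  let E : Set (IdemClass A) := {a | ∃ (l : ℕ) (q : Matrix (Fin l) (Fin l) A) (hq : IsProjM q),
    q ≠ 0 ∧ a = idemClass q hq.2}
  have hDE : D ⊆ E := by
    rintro _ ⟨p, hp, hp_idem, rfl⟩
    exact ⟨p.1, p.2, (hP p hp).1, (hP p hp).2, rfl⟩
  have hE : ∀ a ∈ E, ∃ b ∈ D, StablyLE (2 • b) a := by
    rintro _ ⟨l, q, hq, hq0, rfl⟩
    obtain ⟨p, hp, _, _, r, s, hr, hs, h⟩ := hsmall l q hq hq0
    exact ⟨_, ⟨p, hp, (hP p hp).1.2, rfl⟩, stablyLE_of_mvNEquiv_dSum (hP p hp).1 hq hr hs h⟩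
  obtain ⟨_, ⟨p, hp, hp_idem, rfl⟩, hpq⟩ :=
    exists_nsmul_stablyLE hDE hE ⟨l, q, hq, hq0, rfl⟩ N
  obtain ⟨σ, π, hσπ⟩ := exists_isRetract_of_stablyLE hsimple (hP p hp).2 (htsr p hp) hpq
  exact ⟨p, hp, subEquiv_of_isRetract ((hP p hp).1.nFold N) hσπ⟩
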